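/- arXiv:2106.04652 — 4 statements merged into one kernel-verified Lean document; each statement's English description precedes it below -/
import Mathlib

section
/- Let w be an irrational real number. For each N ∈ ℕ let λ_i^N (i ∈ ℤ) be reals and ω_i^N = λ_i^N − λ_{i−1}^N, and assume: (i) limsup_{ε→0} limsup_{N→∞} max_{|i| ≤ Nε} N·|ω_i^N − ω_{i−1}^N| < ∞; (ii) max_{|i| ≤ Nε} |ω_i^N − w| → 0 as N→∞ and then ε→0. Let P^{N,ε} be the empirical probability measure on [0,1) given by the average of the point masses at λ_i^N mod 1 over the integers i with |i| ≤ Nε. Then sup_A |P^{N,ε}(A) − |A|| → 0 as N→∞ and then ε→0, where the supremum is over all subintervals A ⊂ [0,1] and |A| denotes the length of A; that is, the points λ_i^N mod 1 become equidistributed in the unit interval. -/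
/-!
By Dirichlet's theorem the irrational `w` has a reduced rational
approximation `r = p / q` with `|w - r| ≤ 1 / q²` and `q` as large as desired
(`exists_good_rat`). Once `|ω_i - w| ≤ 1 / q²` on the whole window, any `q` consecutive
points satisfy `|λ_{j+k} - (λ_j + k p / q)| ≤ 2 / q` for `k < q`. Modulo one the numbers
`λ_j + k p / q` form a coset of the `q`-th division points, so an interval of length `L` contains
`q L` of the `q` points up to a bounded error, uniformly in `j` and in the interval
(`block_count`). Cutting the window into blocks of length `q` (`sum_blocks`), the discrepancy is
at most `10 / q` plus the contribution `q / n` of the incomplete last block, where `n` is the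
number of points in the window. Since `n → ∞` with `N`, this is eventually at most `11 / q`.
-/

open Filter
open scoped Classical

/-- The symmetric window at scale `(N, ε)`: integers `i` with `|i| ≤ N·ε`. -/
noncomputable def swindow (N : ℕ) (ε : ℝ) : Finset ℤ :=
  (Finset.Icc (Int.ceil (-(N : ℝ) * ε)) (Int.floor ((N : ℝ) * ε))).filter
    (fun i => |(i : ℝ)| ≤ (N : ℝ) * ε)

/-- Maximum of a (nonnegative) function over a finite set of integers
(0 if the set is empty). -/
noncomputable def fmax (s : Finset ℤ) (f : ℤ → ℝ) : ℝ :=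
  ((s.sup fun i => Real.toNNReal (f i) : NNReal) : ℝ)

/-- limsup over `N → ∞`, valued in `EReal` to avoid junk values. -/
noncomputable def elimsup (f : ℕ → ℝ) : EReal :=
  Filter.limsup (fun N => ((f N : ℝ) : EReal)) Filter.atTop

/-- `Q(N,ε) → L` as `N → ∞` and then `ε → 0`. -/
def DTendsto (Q : ℕ → ℝ → ℝ) (L : ℝ) : Prop :=
  ∀ δ : ℝ, 0 < δ → ∃ ε₀ : ℝ, 0 < ε₀ ∧ ∀ ε : ℝ, 0 < ε → ε < ε₀ →
    elimsup (fun N => |Q N ε - L|) ≤ (δ : EReal)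

/-- `limsup_{ε→0} limsup_{N→∞} Q(N,ε) < ∞`. -/
def DBddLimsup (Q : ℕ → ℝ → ℝ) : Prop :=
  ∃ ε₀ : ℝ, 0 < ε₀ ∧ ∃ C : ℝ, ∀ ε : ℝ, 0 < ε → ε < ε₀ →
    elimsup (fun N => Q N ε) ≤ (C : EReal)

/-- Empirical measure of the points `λ_i mod 1`, `|i| ≤ Nε`, applied to the
subinterval `(a, b)` of `[0, 1]`. -/
noncomputable def empMeas (lam : ℕ → ℤ → ℝ) (N : ℕ) (ε a b : ℝ) : ℝ :=
  (1 / ((swindow N ε).card : ℝ)) *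
    ∑ i ∈ swindow N ε, (if Int.fract (lam N i) ∈ Set.Ioo a b then (1 : ℝ) else 0)

/-- Discrepancy of the empirical measure: the supremum over all subintervals
`(a,b) ⊂ [0,1]` of `|P^{N,ε}((a,b)) − (b−a)|`. -/
noncomputable def discrepancy (lam : ℕ → ℤ → ℝ) (N : ℕ) (ε : ℝ) : ℝ :=
  sSup {d : ℝ | ∃ a b : ℝ, 0 ≤ a ∧ a ≤ b ∧ b ≤ 1 ∧
    d = |empMeas lam N ε a b - (b - a)|}

/-- Dirichlet approximation with large denominator: an irrational number stays at positive distance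
from the rationals of bounded denominator. -/
lemma exists_good_rat (w : ℝ) (hw : Irrational w) (Q : ℕ) :
    ∃ r : ℚ, Q < r.den ∧ |w - r| ≤ 1 / (r.den : ℝ) ^ 2 := by
  have h := hw.eventually_forall_le_dist_cast_rat_of_den_le Q
  obtain ⟨e, he, hpos⟩ : ∃ e : ℝ, (∀ r : ℚ, r.den ≤ Q → e ≤ dist w r) ∧ 0 < e := by
    have h' : ∀ᶠ e : ℝ in nhdsWithin 0 (Set.Ioi 0), ∀ r : ℚ, r.den ≤ Q → e ≤ dist w r :=
      h.filter_mono nhdsWithin_le_nhds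
    exact (h'.and self_mem_nhdsWithin).exists
  obtain ⟨n, hn⟩ := exists_nat_one_div_lt hpos
  obtain ⟨r, hr, hd⟩ := Real.exists_rat_abs_sub_le_and_den_le w (Nat.succ_pos n)
  have hdpos : (0 : ℝ) < r.den := by exact_mod_cast r.den_pos
  have hd1 : (1 : ℝ) ≤ r.den := by exact_mod_cast r.den_pos
  have hd' : (r.den : ℝ) ≤ n + 1 := by exact_mod_cast hd
  have hn0 : (0 : ℝ) < (n : ℝ) + 1 := by positivity
  push_cast at hr
  refine ⟨r, ?_, hr.trans ?_⟩
  · by_contra hc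
    have h1 := he r (not_lt.mp hc)
    rw [Real.dist_eq] at h1
    have h2 : 1 / (((n : ℝ) + 1 + 1) * r.den) ≤ 1 / ((n : ℝ) + 1) := by
      apply one_div_le_one_div_of_le hn0
      nlinarith
    linarith
  · apply one_div_le_one_div_of_le (by positivity)
    nlinarith

lemma card_int_Icc_le (u v : ℝ) (h : u ≤ v + 1) :
    ((Finset.Icc ⌈u⌉ ⌊v⌋).card : ℝ) ≤ v - u + 1 := by
  rw [Int.card_Icc]
  rcases le_total 0 (⌊v⌋ + 1 - ⌈u⌉) with h0 | h0
  · have : (((⌊v⌋ + 1 - ⌈u⌉).toNat : ℤ) : ℝ) = ((⌊v⌋ + 1 - ⌈u⌉ : ℤ) : ℝ) := by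
      rw [Int.toNat_of_nonneg h0]
    rw [Int.cast_natCast] at this
    rw [this]
    push_cast
    linarith [Int.floor_le v, Int.le_ceil u]
  · rw [Int.toNat_of_nonpos h0]
    push_cast
    linarith

/-- Upper bound for the number of points of a perturbed rational rotation in `[a, b]`. If
`fract (y k)` lies in `[a, b]`, the integer `k p - ⌊y k⌋ q` lies in an interval of length
`q (b - a) + 4`, and it determines `k < q` because `p` is invertible modulo `q`. -/
lemma block_upper (r : ℚ) (x a b : ℝ) (hab : a ≤ b) (y : ℕ → ℝ)
    (hy : ∀ k < r.den, |y k - (x + k * r)| ≤ 2 / r.den) :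
    (((Finset.range r.den).filter (fun k => Int.fract (y k) ∈ Set.Icc a b)).card : ℝ)
      ≤ r.den * (b - a) + 5 := by
  have hq : (0 : ℝ) < r.den := by exact_mod_cast r.den_pos
  have hrq : (r : ℝ) * r.den = r.num := by exact_mod_cast Rat.mul_den_eq_num r
  have key : ((Finset.range r.den).filter (fun k => Int.fract (y k) ∈ Set.Icc a b)).card ≤
      (Finset.Icc ⌈(r.den * a - 2 - r.den * x : ℝ)⌉ ⌊(r.den * b + 2 - r.den * x : ℝ)⌋).card := by
    apply Finset.card_le_card_of_injOn (fun k : ℕ => (k : ℤ) * r.num - ⌊y k⌋ * r.den)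
    · intro k hk
      simp only [Finset.coe_filter, Finset.mem_range, Set.mem_ofPred_eq, Set.mem_Icc] at hk
      obtain ⟨hk, h1, h2⟩ := hk
      have h3 := abs_le.mp (hy k hk)
      rw [Int.fract] at h1 h2
      have h4 : -2 ≤ (y k - (x + k * r)) * r.den := by
        have := mul_le_mul_of_nonneg_right h3.1 hq.le
        rwa [← neg_div, div_mul_cancel₀ _ hq.ne'] at this
      have h5 : (y k - (x + k * r)) * r.den ≤ 2 := by
        have := mul_le_mul_of_nonneg_right h3.2 hq.le
        rwa [div_mul_cancel₀ _ hq.ne'] at this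
      have h6 := mul_le_mul_of_nonneg_right h1 hq.le
      have h7 := mul_le_mul_of_nonneg_right h2 hq.le
      have h8 : (k : ℝ) * r * r.den = k * r.num := by rw [mul_assoc, hrq]
      simp only [Finset.coe_Icc, Set.mem_Icc, Int.ceil_le, Int.le_floor]
      push_cast
      constructor <;> nlinarith
    · intro k hk l hl hkl
      simp only [Finset.coe_filter, Finset.mem_range, Set.mem_ofPred_eq] at hk hl
      have hdvd : (r.den : ℤ) ∣ ((k : ℤ) - l) * r.num :=
        ⟨⌊y k⌋ - ⌊y l⌋, by simp only at hkl; linarith⟩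
      have hcop : IsCoprime (r.den : ℤ) r.num := by
        rw [Int.isCoprime_iff_nat_coprime]
        simpa using r.reduced.symm
      have h1 := hcop.dvd_of_dvd_mul_right hdvd
      have h2 : (k : ℤ) - l = 0 := by
        apply Int.eq_zero_of_abs_lt_dvd h1
        rw [abs_lt]
        constructor <;> omega
      omega
  have h2 : (r.den * a : ℝ) ≤ r.den * b := mul_le_mul_of_nonneg_left hab hq.le
  have h3 := card_int_Icc_le (r.den * a - 2 - r.den * x) (r.den * b + 2 - r.den * x) (by linarith)
  have h4 : (((Finset.range r.den).filter (fun k => Int.fract (y k) ∈ Set.Icc a b)).card : ℝ) ≤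
      (Finset.Icc ⌈(r.den * a - 2 - r.den * x : ℝ)⌉ ⌊(r.den * b + 2 - r.den * x : ℝ)⌋).card := by
    exact_mod_cast key
  linarith

/-- Two-sided count in one block. The lower bound is the upper bound applied to the two
complementary intervals `[0, a]` and `[b, 1]`. -/
lemma block_count (r : ℚ) (x a b : ℝ) (ha : 0 ≤ a) (hab : a ≤ b) (hb : b ≤ 1) (y : ℕ → ℝ)
    (hy : ∀ k < r.den, |y k - (x + k * r)| ≤ 2 / r.den) :
    |∑ k ∈ Finset.range r.den, (if Int.fract (y k) ∈ Set.Ioo a b then (1 : ℝ) else 0)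
      - r.den * (b - a)| ≤ 10 := by
  have hsum : ∀ u v : ℝ, u ≤ v → ∑ k ∈ Finset.range r.den,
      (if Int.fract (y k) ∈ Set.Icc u v then (1 : ℝ) else 0) ≤ r.den * (v - u) + 5 := by
    intro u v huv
    rw [Finset.sum_boole]
    exact block_upper r x u v huv y hy
  have h0 := hsum 0 a ha
  have h1 := hsum a b hab
  have h2 := hsum b 1 hb
  have hup : ∑ k ∈ Finset.range r.den, (if Int.fract (y k) ∈ Set.Ioo a b then (1 : ℝ) else 0) ≤
      ∑ k ∈ Finset.range r.den, (if Int.fract (y k) ∈ Set.Icc a b then (1 : ℝ) else 0) := by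
    apply Finset.sum_le_sum
    intro k _
    by_cases h : Int.fract (y k) ∈ Set.Ioo a b
    · rw [if_pos h, if_pos (Set.Ioo_subset_Icc_self h)]
    · rw [if_neg h]
      split_ifs <;> norm_num
  have hlow : (r.den : ℝ) ≤
      ∑ k ∈ Finset.range r.den, (if Int.fract (y k) ∈ Set.Ioo a b then (1 : ℝ) else 0) +
      ∑ k ∈ Finset.range r.den, (if Int.fract (y k) ∈ Set.Icc 0 a then (1 : ℝ) else 0) +
      ∑ k ∈ Finset.range r.den, (if Int.fract (y k) ∈ Set.Icc b 1 then (1 : ℝ) else 0) := by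
    rw [← Finset.sum_add_distrib, ← Finset.sum_add_distrib]
    calc (r.den : ℝ) = ∑ k ∈ Finset.range r.den, (1 : ℝ) := by simp
      _ ≤ _ := by
        apply Finset.sum_le_sum
        intro k _
        have hn := Int.fract_nonneg (y k)
        have hl := (Int.fract_lt_one (y k)).le
        simp only [Set.mem_Ioo, Set.mem_Icc]
        split_ifs <;> first | (norm_num; done) | (exfalso; grind)
  rw [abs_le]
  constructor <;> linarith

/-- A sequence with values in `[0, 1]` whose sum over each complete block of length `q` is
within `10` of `q L` has average within `10 / q + q / n` of `L`; here multiplied by `n`. -/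
lemma sum_blocks (q : ℕ) (hq : 0 < q) (L : ℝ) (hL0 : 0 ≤ L) (hL1 : L ≤ 1) (g : ℕ → ℝ)
    (hg0 : ∀ k, 0 ≤ g k) (hg1 : ∀ k, g k ≤ 1) (n : ℕ)
    (hblock : ∀ s, q * s + q ≤ n → |∑ k ∈ Finset.range q, g (q * s + k) - q * L| ≤ 10) :
    |∑ k ∈ Finset.range n, g k - n * L| ≤ 10 * n / q + q := by
  have hfull : ∀ t, q * t ≤ n → |∑ k ∈ Finset.range (q * t), g k - (q * t : ℕ) * L| ≤ 10 * t := by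
    intro t
    induction t with
    | zero => intro _; simp
    | succ t ih =>
      intro ht
      have h1 := abs_le.mp (ih (by nlinarith))
      have h2 := abs_le.mp (hblock t (by linarith))
      rw [Nat.mul_succ, Finset.sum_range_add, abs_le]
      push_cast at *
      constructor <;> nlinarith
  have hn : q * (n / q) + n % q = n := Nat.div_add_mod n q
  have hq' : (0 : ℝ) < q := by exact_mod_cast hq
  have h1 := abs_le.mp (hfull (n / q) (Nat.mul_div_le n q))
  have hr : ((n % q : ℕ) : ℝ) ≤ q := by exact_mod_cast (Nat.mod_lt n hq).le
  have h2 : ∑ k ∈ Finset.range (n % q), g (q * (n / q) + k) ≤ (n % q : ℕ) := by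
    calc _ ≤ ∑ k ∈ Finset.range (n % q), (1 : ℝ) := Finset.sum_le_sum fun k _ => hg1 _
      _ = _ := by simp
  have h3 : 0 ≤ ∑ k ∈ Finset.range (n % q), g (q * (n / q) + k) :=
    Finset.sum_nonneg fun k _ => hg0 _
  have h4 : ((n / q : ℕ) : ℝ) ≤ n / q := Nat.cast_div_le
  have h5 : ((n % q : ℕ) : ℝ) * L ≤ (n % q : ℕ) := mul_le_of_le_one_right (by positivity) hL1
  have h6 : 0 ≤ ((n % q : ℕ) : ℝ) * L := by positivity
  have hsum : ∑ k ∈ Finset.range n, g k = ∑ k ∈ Finset.range (q * (n / q)), g k +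
      ∑ k ∈ Finset.range (n % q), g (q * (n / q) + k) := by
    rw [← Finset.sum_range_add, hn]
  have hnL : (n : ℝ) * L = (q * (n / q) : ℕ) * L + (n % q : ℕ) * L := by
    rw [← add_mul, ← Nat.cast_add, hn]
  rw [hsum, hnL, mul_div_assoc, abs_le]
  constructor <;> linarith

lemma swindow_eq (N : ℕ) (ε : ℝ) :
    swindow N ε = Finset.Icc (-⌊(N : ℝ) * ε⌋) ⌊(N : ℝ) * ε⌋ := by
  ext i
  simp only [swindow, Finset.mem_filter, Finset.mem_Icc, neg_mul, Int.ceil_neg, abs_le,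
    and_iff_left_iff_imp]
  rintro ⟨h1, h2⟩
  have h1' : -i ≤ ⌊(N : ℝ) * ε⌋ := by omega
  rw [Int.le_floor] at h1' h2
  push_cast at h1'
  exact ⟨by linarith, h2⟩

lemma sum_Icc_neg (M : ℕ) (f : ℤ → ℝ) :
    ∑ i ∈ Finset.Icc (-(M : ℤ)) M, f i = ∑ k ∈ Finset.range (2 * M + 1), f (-(M : ℤ) + k) := by
  symm
  apply Finset.sum_bij (fun (k : ℕ) _ => -(M : ℤ) + k)
  · intro k hk
    simp only [Finset.mem_range, Finset.mem_Icc] at *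
    omega
  · intro k _ l _ h
    omega
  · intro i hi
    simp only [Finset.mem_Icc] at hi
    exact ⟨(i + M).toNat, by simp only [Finset.mem_range]; omega, by omega⟩
  · intros; rfl

lemma le_fmax (s : Finset ℤ) (f : ℤ → ℝ) (i : ℤ) (hi : i ∈ s) : f i ≤ fmax s f := by
  refine (Real.le_coe_toNNReal (f i)).trans ?_
  exact_mod_cast Finset.le_sup (f := fun i => Real.toNNReal (f i)) hi

/-- If all increments in the window of radius `M` are within `1 / q²` of `w`, where
`|w - r| ≤ 1 / q²` and `q` is the denominator of `r`, then the counting error for every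
subinterval of `[0, 1]` is at most `10 n / q + q` with `n = 2 M + 1`. -/
lemma window_count (w : ℝ) (r : ℚ) (hr : |w - r| ≤ 1 / (r.den : ℝ) ^ 2) (l : ℤ → ℝ) (M : ℕ)
    (hl : ∀ i ∈ Finset.Icc (-(M : ℤ)) M, |l i - l (i - 1) - w| ≤ 1 / (r.den : ℝ) ^ 2)
    (a b : ℝ) (ha : 0 ≤ a) (hab : a ≤ b) (hb : b ≤ 1) :
    |∑ i ∈ Finset.Icc (-(M : ℤ)) M, (if Int.fract (l i) ∈ Set.Ioo a b then (1 : ℝ) else 0)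
      - (2 * M + 1 : ℕ) * (b - a)| ≤ 10 * (2 * M + 1 : ℕ) / r.den + r.den := by
  have hq : (0 : ℝ) < r.den := by exact_mod_cast r.den_pos
  rw [sum_Icc_neg]
  apply sum_blocks r.den r.den_pos (b - a) (by linarith) (by linarith)
    (fun k => if Int.fract (l (-(M : ℤ) + k)) ∈ Set.Ioo a b then (1 : ℝ) else 0)
  · intro k
    split_ifs <;> norm_num
  · intro k
    split_ifs <;> norm_num
  intro s hs
  apply block_count r (l (-(M : ℤ) + (r.den * s : ℕ))) a b ha hab hb
    (fun k => l (-(M : ℤ) + (r.den * s + k : ℕ)))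
  have hdrift : ∀ k < r.den, |l (-(M : ℤ) + (r.den * s + k : ℕ)) -
      (l (-(M : ℤ) + (r.den * s : ℕ)) + k * r)| ≤ k * (2 / (r.den : ℝ) ^ 2) := by
    intro k
    induction k with
    | zero => intro _; simp
    | succ k ih =>
      intro hk
      have h1 := abs_le.mp (ih (by omega))
      have h2 := abs_le.mp (hl (-(M : ℤ) + (r.den * s + (k + 1) : ℕ)) (by
        rw [Finset.mem_Icc]
        constructor <;> push_cast <;> [nlinarith; skip]
        have : ((r.den * s + r.den : ℕ) : ℤ) ≤ ((2 * M + 1 : ℕ) : ℤ) := by exact_mod_cast hs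
        push_cast at this
        omega))
      have h3 := abs_le.mp hr
      have h4 : -(M : ℤ) + (r.den * s + (k + 1) : ℕ) - 1 = -(M : ℤ) + (r.den * s + k : ℕ) := by
        push_cast
        ring
      rw [h4] at h2
      have h5 : 2 / (r.den : ℝ) ^ 2 = 2 * (1 / (r.den : ℝ) ^ 2) := by ring
      rw [h5] at h1 ⊢
      generalize 1 / (r.den : ℝ) ^ 2 = e at *
      rw [abs_le]
      push_cast at *
      constructor <;> nlinarith
  intro k hk
  refine (hdrift k hk).trans ?_
  have hk' : (k : ℝ) ≤ r.den := by exact_mod_cast hk.le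
  calc (k : ℝ) * (2 / (r.den : ℝ) ^ 2) ≤ r.den * (2 / (r.den : ℝ) ^ 2) := by gcongr
    _ = 2 / (r.den : ℝ) := by field_simp

theorem stmt7 (w : ℝ) (hw : Irrational w)
    (lam ω : ℕ → ℤ → ℝ)
    (hω : ∀ N i, ω N i = lam N i - lam N (i - 1))
    (hi : DBddLimsup (fun N ε =>
      fmax (swindow N ε) (fun i => (N : ℝ) * |ω N i - ω N (i - 1)|)))
    (hii : DTendsto (fun N ε =>
      fmax (swindow N ε) (fun i => |ω N i - w|)) 0) :
    DTendsto (fun N ε => discrepancy lam N ε) 0 := by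
  intro δ hδ
  obtain ⟨Q, hQ⟩ := exists_nat_gt (11 / δ)
  obtain ⟨r, hrQ, hr⟩ := exists_good_rat w hw Q
  have hq : (0 : ℝ) < r.den := by exact_mod_cast r.den_pos
  have hqδ : 11 / (r.den : ℝ) ≤ δ := by
    have h1 : (Q : ℝ) < r.den := by exact_mod_cast hrQ
    rw [div_le_iff₀ hq]
    rw [div_lt_iff₀ hδ] at hQ
    nlinarith
  have hη : 0 < 1 / (r.den : ℝ) ^ 2 := by positivity
  obtain ⟨ε₀, hε₀, H⟩ := hii (1 / (r.den : ℝ) ^ 2 / 2) (by positivity)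
  refine ⟨ε₀, hε₀, fun ε hε hεε₀ => ?_⟩
  have hlt : elimsup (fun N => |fmax (swindow N ε) (fun i => |ω N i - w|) - 0|) <
      ((1 / (r.den : ℝ) ^ 2 : ℝ) : EReal) :=
    (H ε hε hεε₀).trans_lt (by exact_mod_cast half_lt_self hη)
  have hev := Filter.eventually_lt_of_limsup_lt hlt
  have hlarge : ∀ᶠ N : ℕ in atTop, (r.den : ℝ) ^ 2 ≤ N * ε :=
    (tendsto_natCast_atTop_atTop.atTop_mul_const hε).eventually_ge_atTop _
  refine Filter.limsup_le_of_le (by isBoundedDefault) ?_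
  filter_upwards [hev, hlarge] with N hN hNl
  have hN' : |fmax (swindow N ε) (fun i => |ω N i - w|) - 0| < 1 / (r.den : ℝ) ^ 2 := by
    exact_mod_cast hN
  rw [sub_zero] at hN'
  obtain ⟨M, hM⟩ : ∃ M : ℕ, (M : ℤ) = ⌊(N : ℝ) * ε⌋ :=
    ⟨⌊(N : ℝ) * ε⌋.toNat, Int.toNat_of_nonneg (Int.floor_nonneg.mpr (by positivity))⟩
  have hwin : swindow N ε = Finset.Icc (-(M : ℤ)) M := by rw [swindow_eq, hM]
  have hcard : (swindow N ε).card = 2 * M + 1 := by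
    rw [hwin, Int.card_Icc]
    omega
  -- The window has at least `q²` points, which makes the incomplete block negligible.
  have hnq : (r.den : ℝ) ^ 2 ≤ (2 * M + 1 : ℕ) := by
    have h1 := Int.lt_floor_add_one ((N : ℝ) * ε)
    rw [← hM] at h1
    push_cast at h1 ⊢
    have h2 : (0 : ℝ) ≤ M := by positivity
    linarith
  have hn0 : (0 : ℝ) < (2 * M + 1 : ℕ) := by positivity
  have hd0 : 0 ≤ discrepancy lam N ε := by
    apply Real.sSup_nonneg
    rintro d ⟨a, b, -, -, -, rfl⟩
    exact abs_nonneg _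
  have hd : discrepancy lam N ε ≤ δ := by
    apply Real.sSup_le _ hδ.le
    rintro d ⟨a, b, ha, hab, hb, rfl⟩
    have hcount := window_count w r hr (lam N) M (by
      intro i him
      rw [← hω]
      rw [← hwin] at him
      exact ((le_fmax _ (fun i => |ω N i - w|) i him).trans (le_abs_self _)).trans hN'.le)
      a b ha hab hb
    rw [← hwin] at hcount
    rw [empMeas, hcard]
    generalize ∑ i ∈ swindow N ε,
      (if Int.fract (lam N i) ∈ Set.Ioo a b then (1 : ℝ) else 0) = S at *
    generalize ((2 * M + 1 : ℕ) : ℝ) = n at *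
    have h1 : 1 / n * S - (b - a) = (S - n * (b - a)) / n := by field_simp
    rw [h1, abs_div, abs_of_pos hn0]
    refine le_trans ?_ hqδ
    rw [div_le_iff₀ hn0]
    refine hcount.trans ?_
    have h2 : (r.den : ℝ) ≤ n / r.den := by
      rw [le_div_iff₀ hq]
      nlinarith
    calc 10 * n / r.den + r.den ≤ 10 * n / r.den + n / r.den := by linarith
      _ = 11 / r.den * n := by ring
  rw [sub_zero, abs_of_nonneg hd0]
  exact_mod_cast hd
end

section
/- Fix K > 0 and let r(w) = exp(−2K − 2Kw). For all ω, λ ∈ ℝ, the expectation of r under μ_K[ω,λ] equals exp(−2Kω); that is, ∑_{n∈ℤ} exp(−2K − 2Kn) · μ_K[ω,λ](n) = exp(−2Kω). In particular this expectation does not depend on λ. -/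
/-!
Completing the square gives `exp(-2K - 2Kn) ρ[λ-ω](m) ρ[λ](m+n) = exp(-2Kω) ρ[λ-ω](m-1) ρ[λ](m+n+1)`:
the exponential weight only moves the two Gaussian variables by one unit in opposite directions
(`tilt`). Summing over `m` yields `exp(-2K - 2Kn) μ(n) = exp(-2Kω) μ(n+2)` (`weight_mul_muK`), and the
claim follows by summing over `n`, since `μ` has total mass one (`tsum_muK`).
-/

/-- Normalization constant `Z_K(λ) = ∑_{m∈ℤ} exp(−K(m−λ)²)`. -/
noncomputable def Zfun (K lam : ℝ) : ℝ :=
  ∑' m : ℤ, Real.exp (-K * ((m : ℝ) - lam) ^ 2)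

/-- Discrete Gaussian pmf `ρ_K[λ](n) = exp(−K(n−λ)²)/Z_K(λ)`. -/
noncomputable def rho (K lam : ℝ) (n : ℤ) : ℝ :=
  Real.exp (-K * ((n : ℝ) - lam) ^ 2) / Zfun K lam

/-- `μ_K[ω,λ](n) = ∑_{m∈ℤ} ρ_K[λ−ω](m) ρ_K[λ](m+n)`. -/
noncomputable def muK (K ω lam : ℝ) (n : ℤ) : ℝ :=
  ∑' m : ℤ, rho K (lam - ω) m * rho K lam (m + n)

lemma summable_gauss (K : ℝ) (hK : 0 < K) (lam : ℝ) :
    Summable fun m : ℤ => Real.exp (-K * ((m : ℝ) - lam) ^ 2) := by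
  have h := HurwitzKernelBounds.summable_f_int 0 (-lam) (t := K / Real.pi) (by positivity)
  refine h.congr fun m => ?_
  simp only [HurwitzKernelBounds.f_int, pow_zero, one_mul]
  congr 1
  field_simp
  ring

lemma summable_rho (K : ℝ) (hK : 0 < K) (lam : ℝ) : Summable (rho K lam) :=
  (summable_gauss K hK lam).div_const _

lemma Zfun_pos (K : ℝ) (hK : 0 < K) (lam : ℝ) : 0 < Zfun K lam :=
  (summable_gauss K hK lam).tsum_pos (fun _ => (Real.exp_pos _).le) 0 (Real.exp_pos _)

lemma rho_nonneg (K : ℝ) (hK : 0 < K) (lam : ℝ) (n : ℤ) : 0 ≤ rho K lam n :=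
  div_nonneg (Real.exp_pos _).le (Zfun_pos K hK lam).le

lemma tsum_rho (K : ℝ) (hK : 0 < K) (lam : ℝ) : ∑' n : ℤ, rho K lam n = 1 := by
  simp only [rho]
  rw [tsum_div_const]
  exact div_self (Zfun_pos K hK lam).ne'

lemma tsum_muK (K : ℝ) (hK : 0 < K) (ω lam : ℝ) : ∑' n : ℤ, muK K ω lam n = 1 := by
  -- The shear `(n, m) ↦ (m, m + n)` turns the double series into a product of two series.
  let e : ℤ × ℤ ≃ ℤ × ℤ :=
    { toFun := fun p => (p.2, p.2 + p.1)
      invFun := fun p => (p.2 - p.1, p.1)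
      left_inv := fun p => by simp
      right_inv := fun p => by simp }
  have hprod : Summable fun p : ℤ × ℤ => rho K (lam - ω) p.1 * rho K lam p.2 :=
    (summable_rho K hK (lam - ω)).mul_of_nonneg (summable_rho K hK lam)
      (rho_nonneg K hK _) (rho_nonneg K hK _)
  have hF : Summable (Function.uncurry fun n m : ℤ => rho K (lam - ω) m * rho K lam (m + n)) :=
    e.summable_iff.mpr hprod
  have hshift (m : ℤ) : ∑' n : ℤ, rho K lam (m + n) = 1 :=
    ((Equiv.addLeft m).tsum_eq (rho K lam)).trans (tsum_rho K hK lam)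
  simp only [muK]
  rw [← hF.tsum_comm]
  simp only [tsum_mul_left, hshift, mul_one]
  exact tsum_rho K hK _

lemma tilt (K ω lam : ℝ) (n m : ℤ) :
    Real.exp (-2 * K - 2 * K * (n : ℝ)) * (rho K (lam - ω) m * rho K lam (m + n)) =
      Real.exp (-2 * K * ω) * (rho K (lam - ω) (m - 1) * rho K lam (m - 1 + (n + 2))) := by
  simp only [rho]
  rw [div_mul_div_comm, div_mul_div_comm, mul_div_assoc', mul_div_assoc', ← Real.exp_add,
    ← Real.exp_add, ← Real.exp_add, ← Real.exp_add]
  congr 2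
  push_cast
  ring

lemma weight_mul_muK (K ω lam : ℝ) (n : ℤ) :
    Real.exp (-2 * K - 2 * K * (n : ℝ)) * muK K ω lam n =
      Real.exp (-2 * K * ω) * muK K ω lam (n + 2) := by
  simp only [muK]
  rw [← tsum_mul_left, ← tsum_mul_left]
  simp only [tilt]
  exact (Equiv.subRight (1 : ℤ)).tsum_eq
    fun m => Real.exp (-2 * K * ω) * (rho K (lam - ω) m * rho K lam (m + (n + 2)))

theorem stmt8 (K : ℝ) (hK : 0 < K) (ω lam : ℝ) :
    ∑' n : ℤ, Real.exp (-2 * K - 2 * K * (n : ℝ)) * muK K ω lam n =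
      Real.exp (-2 * K * ω) := by
  simp only [weight_mul_muK]
  have hshift : ∑' n : ℤ, muK K ω lam (n + 2) = 1 :=
    ((Equiv.addRight (2 : ℤ)).tsum_eq (muK K ω lam)).trans (tsum_muK K hK ω lam)
  rw [tsum_mul_left, hshift, mul_one]
end

section
/- Fix K > 0 and let u_D(λ) = ∑_{n∈ℤ} n · exp(−K(n−λ)²) / Z_K(λ) be the first moment of the discrete Gaussian ρ_K[λ]. Then for every ω ∈ ℝ, ∫_0^1 [u_D(λ) − u_D(λ − ω)] dλ = ω; equivalently, ∫_{ω−1/2}^{ω+1/2} u_D(λ) dλ = ω. -/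
/-- First moment `u_D(λ) = ∑_{n∈ℤ} n ρ_K[λ](n)` of the discrete Gaussian. -/
noncomputable def uD (K lam : ℝ) : ℝ :=
  ∑' n : ℤ, (n : ℝ) * rho K lam n

/-- The unnormalized `k`-th moment `∑ n ^ k exp (-K (n - λ)²)` of the discrete Gaussian. -/
noncomputable def gaussMoment (K : ℝ) (k : ℕ) (lam : ℝ) : ℝ :=
  ∑' n : ℤ, (n : ℝ) ^ k * Real.exp (-K * ((n : ℝ) - lam) ^ 2)

lemma summable_moment_bound (K : ℝ) (hK : 0 < K) (k : ℕ) (R : ℝ) :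
    Summable fun n : ℤ =>
      Real.exp (K * R ^ 2) * (|(n : ℝ)| ^ k * Real.exp (-K / 2 * (n : ℝ) ^ 2)) := by
  have h := summable_pow_mul_jacobiTheta₂_term_bound 0
    (T := K / (2 * Real.pi)) (by positivity) k
  refine (h.congr fun n => ?_).mul_left _
  push_cast
  congr 2
  have := Real.pi_ne_zero
  field_simp
  ring

lemma moment_term_bound (K : ℝ) (hK : 0 < K) (k : ℕ) {R lam : ℝ} (h : |lam| ≤ R) (n : ℤ) :
    ‖(n : ℝ) ^ k * Real.exp (-K * ((n : ℝ) - lam) ^ 2)‖ ≤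
      Real.exp (K * R ^ 2) * (|(n : ℝ)| ^ k * Real.exp (-K / 2 * (n : ℝ) ^ 2)) := by
  rw [norm_mul, norm_pow, Real.norm_eq_abs, Real.norm_eq_abs, Real.abs_exp, mul_left_comm,
    ← Real.exp_add]
  gcongr
  have h1 : lam ^ 2 ≤ R ^ 2 :=
    sq_le_sq' (by linarith [neg_abs_le lam]) (by linarith [le_abs_self lam])
  have h2 : 0 ≤ R ^ 2 - (n : ℝ) ^ 2 / 2 + ((n : ℝ) - lam) ^ 2 := by
    nlinarith [sq_nonneg ((n : ℝ) - 2 * lam)]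
  nlinarith [mul_nonneg hK.le h2]

lemma summable_moment (K : ℝ) (hK : 0 < K) (k : ℕ) (lam : ℝ) :
    Summable fun n : ℤ => (n : ℝ) ^ k * Real.exp (-K * ((n : ℝ) - lam) ^ 2) :=
  Summable.of_norm_bounded (summable_moment_bound K hK k |lam|)
    (moment_term_bound K hK k le_rfl)

lemma continuous_gaussMoment (K : ℝ) (hK : 0 < K) (k : ℕ) : Continuous (gaussMoment K k) := by
  rw [continuous_iff_continuousAt]
  intro x
  have hc : ContinuousOn (gaussMoment K k) (Metric.closedBall 0 (|x| + 1)) := by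
    refine continuousOn_tsum (fun n => by fun_prop) (summable_moment_bound K hK k (|x| + 1)) ?_
    intro n y hy
    exact moment_term_bound K hK k (by simpa using hy) n
  refine hc.continuousAt (Metric.closedBall_mem_nhds_of_mem ?_)
  simp

lemma Zfun_eq (K lam : ℝ) : Zfun K lam = gaussMoment K 0 lam := by
  simp [Zfun, gaussMoment]

lemma gaussMoment_zero_pos (K : ℝ) (hK : 0 < K) (lam : ℝ) : 0 < gaussMoment K 0 lam :=
  (summable_moment K hK 0 lam).tsum_pos (fun n => by positivity) 0 (by positivity)

lemma uD_eq (K lam : ℝ) : uD K lam = gaussMoment K 1 lam / gaussMoment K 0 lam := by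
  simp only [uD, rho, Zfun_eq, ← mul_div_assoc]
  rw [tsum_div_const]
  simp [gaussMoment]

lemma continuous_uD (K : ℝ) (hK : 0 < K) : Continuous (uD K) := by
  rw [funext (uD_eq K)]
  exact (continuous_gaussMoment K hK 1).div₀ (continuous_gaussMoment K hK 0)
    fun x => (gaussMoment_zero_pos K hK x).ne'

lemma uD_add_one (K : ℝ) (hK : 0 < K) (lam : ℝ) : uD K (lam + 1) = uD K lam + 1 := by
  have h (k : ℕ) : gaussMoment K k (lam + 1) =
      ∑' n : ℤ, ((n : ℝ) + 1) ^ k * Real.exp (-K * ((n : ℝ) - lam) ^ 2) := by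
    rw [gaussMoment, ← (Equiv.addRight (1 : ℤ)).tsum_eq]
    simp
  have h0 : gaussMoment K 0 (lam + 1) = gaussMoment K 0 lam := by
    rw [h]; simp [gaussMoment]
  have h1 : gaussMoment K 1 (lam + 1) = gaussMoment K 1 lam + gaussMoment K 0 lam := by
    rw [h, gaussMoment, gaussMoment,
      ← (summable_moment K hK 1 lam).tsum_add (summable_moment K hK 0 lam)]
    congr 1 with n
    ring
  rw [uD_eq, uD_eq, h0, h1, add_div, div_self (gaussMoment_zero_pos K hK lam).ne']

lemma uD_neg (K lam : ℝ) : uD K (-lam) = -uD K lam := by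
  have h (k : ℕ) : gaussMoment K k (-lam) = (-1) ^ k * gaussMoment K k lam := by
    rw [gaussMoment, gaussMoment, ← (Equiv.neg ℤ).tsum_eq, ← tsum_mul_left]
    congr 1 with n
    rw [← mul_assoc, ← mul_pow]
    simp only [Equiv.neg_apply, Int.cast_neg]
    congr 2 <;> ring
  rw [uD_eq, uD_eq, h, h]
  ring

lemma integral_uD_sub_id (K : ℝ) (hK : 0 < K) (a : ℝ) :
    ∫ x in a..(a + 1), (uD K x - x) = 0 := by
  have hp : Function.Periodic (fun x => uD K x - x) 1 := fun x => by
    simp only [uD_add_one K hK]; ring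
  rw [hp.intervalIntegral_add_eq a (-(1 / 2)), show -(1 / 2) + 1 = (1 / 2 : ℝ) by norm_num]
  have h := intervalIntegral.integral_comp_neg (a := -(1 / 2)) (b := 1 / 2) fun x => uD K x - x
  have e : ∀ x : ℝ, uD K (-x) - -x = -(uD K x - x) := fun x => by rw [uD_neg]; ring
  simp only [e, intervalIntegral.integral_neg, neg_neg] at h
  linarith

theorem stmt12 (K : ℝ) (hK : 0 < K) (ω : ℝ) :
    (∫ lam in (0 : ℝ)..1, (uD K lam - uD K (lam - ω)) = ω) ∧
    (∫ lam in (ω - 1 / 2)..(ω + 1 / 2), uD K lam = ω) := by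
  have hc := continuous_uD K hK
  have hg : Continuous fun x => uD K x - x := by fun_prop
  have hg' : Continuous fun x => uD K (x - ω) - (x - ω) := by fun_prop
  constructor
  · have e : ∀ x, uD K x - uD K (x - ω) =
        ((uD K x - x) - (uD K (x - ω) - (x - ω))) + ω := fun x => by ring
    have h0 := integral_uD_sub_id K hK 0
    have h1 := integral_uD_sub_id K hK (0 - ω)
    rw [zero_add] at h0
    rw [show 0 - ω + 1 = 1 - ω by ring,
      ← intervalIntegral.integral_comp_sub_right (fun x => uD K x - x)] at h1
    simp only [e]
    rw [intervalIntegral.integral_add (Continuous.intervalIntegrable (by fun_prop) _ _)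
      (continuous_const.intervalIntegrable _ _),
      intervalIntegral.integral_sub (hg.intervalIntegrable _ _) (hg'.intervalIntegrable _ _),
      h0, h1]
    simp
  · have h := integral_uD_sub_id K hK (ω - 1 / 2)
    rw [show ω - 1 / 2 + 1 = ω + 1 / 2 by ring,
      intervalIntegral.integral_sub (hc.intervalIntegrable _ _)
        (continuous_id'.intervalIntegrable _ _), integral_id] at h
    linarith
end

section
/- Fix K > 0 and an integer N ≥ 5. For z ∈ ℤ^N with cyclic (mod N) indexing, let H(z) = ∑_{k=1}^N z_k², let r(w) = exp(−2K − 2Kw), and for each i let z^{i,i+1} ∈ ℤ^N be obtained from z by z_{i−1} ↦ z_{i−1} − 1, z_i ↦ z_i + 2, z_{i+1} ↦ z_{i+1} − 1 (all other coordinates unchanged; indices mod N). Then detailed balance holds: for every z ∈ ℤ^N and every i, r(z_i − z_{i−1}) · exp(−K H(z)) = r((z^{i,i+1})_{i+1} − (z^{i,i+1})_i) · exp(−K H(z^{i,i+1})). -/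
/-!
Both sides are single exponentials, so detailed balance is an identity between exponents.
Writing `a, b, c` for the slopes at `i - 1, i, i + 1`, the jump changes the energy by
`(-2a + 1) + (4b + 4) + (-2c + 1)` (`Ham_jumpR`), because the three sites are distinct when
`N ≥ 3`. The reverse rate has argument `(c - 1) - (b + 2)`, and the exponents then agree.
-/

/-- Arrhenius rate `r(w) = exp(−2K − 2Kw)`. -/
noncomputable def arr (K : ℝ) (w : ℤ) : ℝ :=
  Real.exp (-2 * K - 2 * K * (w : ℝ))

/-- Hamiltonian `H(z) = ∑_k z_k²` on the periodic lattice. -/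
def Ham (N : ℕ) [NeZero N] (z : ZMod N → ℤ) : ℤ :=
  ∑ k : ZMod N, (z k) ^ 2

/-- The slope configuration after a particle jumps from column `i` to column
`i+1`: `z_{i−1} ↦ z_{i−1} − 1`, `z_i ↦ z_i + 2`, `z_{i+1} ↦ z_{i+1} − 1`. -/
def jumpR (N : ℕ) (z : ZMod N → ℤ) (i : ZMod N) : ZMod N → ℤ :=
  fun k => z k + (if k = i - 1 then -1 else 0) + (if k = i then 2 else 0) +
    (if k = i + 1 then -1 else 0)

lemma sites_distinct (N : ℕ) (hN : 3 ≤ N) (i : ZMod N) :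
    i ≠ i - 1 ∧ i + 1 ≠ i - 1 ∧ i + 1 ≠ i := by
  have cast_ne : ∀ m : ℕ, 0 < m → m < N → (m : ZMod N) ≠ 0 := fun m h0 hm h =>
    absurd (Nat.le_of_dvd h0 ((ZMod.natCast_eq_zero_iff m N).1 h)) (by omega)
  have h1 : (1 : ZMod N) ≠ 0 := by exact_mod_cast cast_ne 1 (by omega) (by omega)
  have h2 : (2 : ZMod N) ≠ 0 := by exact_mod_cast cast_ne 2 (by omega) (by omega)
  refine ⟨fun h => h1 ?_, fun h => h2 ?_, fun h => h1 ?_⟩ <;> linear_combination h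

lemma Ham_jumpR (N : ℕ) [NeZero N] (hN : 3 ≤ N) (z : ZMod N → ℤ) (i : ZMod N) :
    Ham N (jumpR N z i) = Ham N z + (6 - 2 * z (i - 1) + 4 * z i - 2 * z (i + 1)) := by
  obtain ⟨h1, h2, h3⟩ := sites_distinct N hN i
  have site_change : ∀ k, jumpR N z i k ^ 2 = z k ^ 2 +
      ((if k = i - 1 then -2 * z k + 1 else 0) + (if k = i then 4 * z k + 4 else 0) +
        (if k = i + 1 then -2 * z k + 1 else 0)) := by
    intro k
    unfold jumpR
    -- `k` coincides with at most one of the three sites, so the overlapping cases are void.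
    split_ifs with c1 c2 c3 c3 c2 c3 c3 <;> first
      | ring1
      | exact absurd (c2.symm.trans c1) h1
      | exact absurd (c3.symm.trans c1) h2
      | exact absurd (c3.symm.trans c2) h3
  unfold Ham
  simp only [site_change, Finset.sum_add_distrib, Finset.sum_ite_eq', Finset.mem_univ, if_true]
  ring

theorem stmt14 (K : ℝ) (hK : 0 < K) (N : ℕ) [NeZero N] (hN : 5 ≤ N)
    (z : ZMod N → ℤ) (i : ZMod N) :
    arr K (z i - z (i - 1)) * Real.exp (-K * (Ham N z : ℝ)) =
      arr K (jumpR N z i (i + 1) - jumpR N z i i) *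
        Real.exp (-K * (Ham N (jumpR N z i) : ℝ)) := by
  obtain ⟨h1, h2, h3⟩ := sites_distinct N (by omega) i
  have value_right : jumpR N z i (i + 1) = z (i + 1) - 1 := by
    simp only [jumpR, if_neg h2, if_neg h3, if_true]
    ring
  have value_mid : jumpR N z i i = z i + 2 := by
    simp only [jumpR, if_neg h1, if_neg h3.symm, if_true]
    ring
  rw [Ham_jumpR N (by omega), value_right, value_mid]
  unfold arr
  rw [← Real.exp_add, ← Real.exp_add]
  congr 1
  push_cast
  ring
end
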